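/- Let n ≥ 2 and let θ : [0,∞) → 𝒳ₙ be (locally) absolutely continuous with J_T(θ) < ∞ for every T ≥ 0. Then for all t ≥ 0, d(θ_t) ≤ (n−1)·e^{−nt}·( 2√2·∫₀ᵗ e^{ns}·√(j_s(θ)) ds + d(θ_0) ), where j_s(θ) := (1/2)·Σ_{j=1}ⁿ |dθ^j_s/ds − 2φ^j(θ_s)|² is the energy density, so that J_t(θ) = ∫₀ᵗ j_s(θ) ds. -/

import Mathlib

open MeasureTheory Filter Set
open scoped Real Topology ENNReal Classical

noncomputable section

/-- The configuration space `𝒳ₙ` of `n` ordered points on (a lift of) the circle: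
`θ¹ < θ² < ⋯ < θⁿ < θ¹ + 2π`. -/
def Xspace (n : ℕ) : Set (Fin n → ℝ) :=
  {x | StrictMono x ∧ ∀ i j : Fin n, x i < x j + 2 * π}

/-- The value `θ^{j+1}`, with the convention `θ^{n+1} = θ¹ + 2π`. -/
def nextVal {n : ℕ} (x : Fin n → ℝ) (j : Fin n) : ℝ :=
  if h : (j : ℕ) + 1 < n then x ⟨(j : ℕ) + 1, h⟩ else x ⟨0, j.pos⟩ + 2 * π

/-- The gap `θ^{j+1} - θ^j` (with wrap-around convention). -/
def gap {n : ℕ} (x : Fin n → ℝ) (j : Fin n) : ℝ := nextVal x j - x j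

/-- The minimal gap `Δ(θ) = min_j (θ^{j+1} - θ^j)`. -/
def minGap {n : ℕ} (x : Fin n → ℝ) : ℝ := ⨅ j : Fin n, gap x j

/-- `d(θ) := max_j |2π/n - (θ^{j+1} - θ^j)|`. -/
def dGap {n : ℕ} (x : Fin n → ℝ) : ℝ := ⨆ j : Fin n, |2 * π / n - gap x j|

/-- `φ^j(θ) = ∑_{k ≠ j} cot((θ^j - θ^k)/2)`. -/
def phi {n : ℕ} (x : Fin n → ℝ) (j : Fin n) : ℝ :=
  ∑ k ∈ Finset.univ.erase j, Real.cot ((x j - x k) / 2)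

/-- `φ_a^j := (a/4) φ^j`. -/
def phiA {n : ℕ} (a : ℝ) (x : Fin n → ℝ) (j : Fin n) : ℝ := a / 4 * phi x j

/-- Absolute continuity of every coordinate of `θ` on `[0, T]`: each component is the
integral of a (locally) integrable function. -/
def AbsCont {n : ℕ} (T : ℝ) (θ : ℝ → Fin n → ℝ) : Prop :=
  ∃ v : ℝ → Fin n → ℝ, (∀ j, IntegrableOn (fun s => v s j) (Icc 0 T)) ∧
    ∀ t ∈ Icc (0 : ℝ) T, ∀ j, θ t j = θ 0 j + ∫ s in (0 : ℝ)..t, v s j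

/-- Truncated multiradial Dirichlet energy `J_T(θ)`. -/
def mEnergy (n : ℕ) (T : ℝ) (θ : ℝ → Fin n → ℝ) : ℝ≥0∞ :=
  if AbsCont T θ then
    ENNReal.ofReal (1 / 2) *
      ∫⁻ s in Ioc (0 : ℝ) T,
        ENNReal.ofReal (∑ j, (deriv (fun t => θ t j) s - 2 * phi (θ s) j) ^ 2)
  else ⊤

/-- Multiradial Dirichlet energy `J(θ) = lim_{T→∞} J_T(θ)`, the supremum of the
nondecreasing family `J_T(θ)`. -/
def mEnergyInf (n : ℕ) (θ : ℝ → Fin n → ℝ) : ℝ≥0∞ := ⨆ T : ℝ, mEnergy n T θ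

/-- The energy density `j_s(θ) := (1/2) ∑_j |dθ^j_s/ds - 2φ^j(θ_s)|²`. -/
def eDensity {n : ℕ} (θ : ℝ → Fin n → ℝ) (s : ℝ) : ℝ :=
  (1 / 2) * ∑ j, (deriv (fun t => θ t j) s - 2 * phi (θ s) j) ^ 2

/-!
If the path `θ` is absolutely continuous then so is its minimal gap `Δ`, and at almost every time
`Δ' = (θ^{j+1})' - (θ^j)'` for any index `j` of a minimal gap. Up to an error of at most
`2 √2 √(j_s)` this is `2 (φ^{j+1} - φ^j)`. Shifting the summation index of `φ^{j+1}` pairs the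
force of `θ^{k+1}` on `θ^{j+1}` with that of `θ^k` on `θ^j`; since `cot' ≤ -1` and the gap `j`
is minimal, the difference of the two is at least half of gap `k` minus gap `j`, and summing over
`k` yields `2 (φ^{j+1} - φ^j) ≥ 2π - n Δ`. Hence `u = 2π/n - Δ` satisfies
`u' + n u ≤ 2 √2 √(j_s)`, and Grönwall's inequality bounds `u`. Finally `u ≤ d ≤ (n - 1) u`,
because the deviations `2π/n - (θ^{j+1} - θ^j)` add up to zero and none exceeds `u`.
-/

lemma cot_periodic : Function.Periodic Real.cot π := fun x => by
  simp only [← Real.tan_inv_eq_cot, Real.tan_add_pi]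

lemma hasDerivAt_cot {x : ℝ} (hx : Real.sin x ≠ 0) :
    HasDerivAt Real.cot (-(1 / Real.sin x ^ 2)) x := by
  have hdiv := (Real.hasDerivAt_cos x).fun_div (Real.hasDerivAt_sin x) hx
  simp only [← Real.cot_eq_cos_div_sin] at hdiv
  refine hdiv.congr_deriv ?_
  rw [← Real.sin_sq_add_cos_sq x]
  ring

lemma antitoneOn_cot_add_id : AntitoneOn (fun x => Real.cot x + x) (Ioo 0 π) := by
  have hderiv (x : ℝ) (hx : x ∈ Ioo 0 π) :
      HasDerivAt (fun y => Real.cot y + y) (-(1 / Real.sin x ^ 2) + 1) x :=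
    (hasDerivAt_cot (Real.sin_pos_of_mem_Ioo hx).ne').fun_add (hasDerivAt_id' x)
  refine antitoneOn_of_hasDerivWithinAt_nonpos (convex_Ioo 0 π)
    (fun x hx => (hderiv x hx).continuousAt.continuousWithinAt)
    (fun x hx => (hderiv x (interior_subset hx)).hasDerivWithinAt) fun x hx => ?_
  have hsin := Real.sin_pos_of_mem_Ioo (interior_subset hx)
  linarith [one_le_one_div (pow_pos hsin 2) (Real.sin_sq_le_one x)]

lemma sub_le_cot_sub_cot {a b : ℝ} (ha : 0 < a) (hab : a ≤ b) (hb : b < π) :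
    b - a ≤ Real.cot a - Real.cot b := by
  linarith [antitoneOn_cot_add_id ⟨ha, hab.trans_lt hb⟩ ⟨ha.trans_le hab, hb⟩ hab]

section FiniteFamilies

variable {ι : Type*} [Fintype ι]

lemma dist_iInf_le_sum_dist (u v : ι → ℝ) :
    dist (⨅ i, u i) (⨅ i, v i) ≤ ∑ i, dist (u i) (v i) := by
  cases isEmpty_or_nonempty ι
  · simp
  have hle (u v : ι → ℝ) : (⨅ i, u i) ≤ (⨅ i, v i) + ∑ i, dist (u i) (v i) := by
    obtain ⟨i, hi⟩ := exists_eq_ciInf_of_finite (f := v)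
    calc (⨅ i, u i) ≤ u i := ciInf_le (Finite.bddBelow_range u) i
      _ ≤ v i + dist (u i) (v i) := by linarith [Real.dist_eq (u i) (v i), le_abs_self (u i - v i)]
      _ ≤ v i + ∑ i, dist (u i) (v i) := by
        gcongr
        exact Finset.single_le_sum (f := fun i => dist (u i) (v i))
          (fun _ _ => dist_nonneg) (Finset.mem_univ i)
      _ = (⨅ i, v i) + ∑ i, dist (u i) (v i) := by rw [hi]
  rw [Real.dist_eq, abs_sub_le_iff, sub_le_iff_le_add', sub_le_iff_le_add']
  refine ⟨hle u v, ?_⟩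
  simpa only [dist_comm] using hle v u

lemma abs_sub_le_mul_sub_iInf {u : ι → ℝ} {c : ℝ} (hu : ∑ i, u i = Fintype.card ι * c) (i : ι) :
    |c - u i| ≤ (Fintype.card ι - 1) * (c - ⨅ k, u k) := by
  have hle (k : ι) : c - u k ≤ c - ⨅ k, u k :=
    sub_le_sub_left (ciInf_le (Finite.bddBelow_range u) k) c
  have hsum : ∑ k, (c - u k) = 0 := by
    rw [Finset.sum_sub_distrib, hu, Finset.sum_const, Finset.card_univ, nsmul_eq_mul, sub_self]
  rcases subsingleton_or_nontrivial ι with _ | _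
  · rw [Fintype.sum_subsingleton _ i] at hsum
    simp [hsum, Fintype.card_eq_one_iff_nonempty_unique.2 ⟨⟨i⟩, fun k => Subsingleton.elim k i⟩]
  have hcard : (2 : ℝ) ≤ Fintype.card ι := by exact_mod_cast Fintype.one_lt_card
  have hneg : -(c - u i) ≤ (Fintype.card ι - 1) * (c - ⨅ k, u k) := by
    have herase := Finset.sum_le_card_nsmul (Finset.univ.erase i) (fun k => c - u k) _
      fun k _ => hle k
    rw [nsmul_eq_mul, Finset.card_erase_of_mem (Finset.mem_univ i), Finset.card_univ,
      Nat.cast_pred (Fintype.card_pos_iff.2 ⟨i⟩)] at herase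
    linarith [Finset.add_sum_erase Finset.univ (fun k => c - u k) (Finset.mem_univ i)]
  have hnonneg : 0 ≤ c - ⨅ k, u k := by nlinarith [hle i]
  exact abs_le'.2 ⟨by nlinarith [hle i], hneg⟩

lemma intervalIntegrable_sqrt_sum_sq {μ : Measure ℝ} {w : ι → ℝ → ℝ} {a b : ℝ}
    (hw : ∀ i, IntervalIntegrable (w i) μ a b) :
    IntervalIntegrable (fun s => √(∑ i, w i s ^ 2)) μ a b := by
  have hsum : IntervalIntegrable (∑ i, fun s => |w i s|) μ a b :=
    IntervalIntegrable.sum Finset.univ fun i _ => (hw i).abs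
  have hmeas : AEStronglyMeasurable (fun s => √(∑ i, w i s ^ 2)) (μ.restrict (uIoc a b)) :=
    (Finset.aemeasurable_fun_sum Finset.univ fun i _ =>
      (hw i).def'.aemeasurable.pow_const 2).sqrt.aestronglyMeasurable
  refine hsum.mono_fun' hmeas (Eventually.of_forall fun s => ?_)
  simp only [Real.norm_eq_abs, abs_of_nonneg (Real.sqrt_nonneg _), Finset.sum_apply]
  refine Real.sqrt_le_iff.2 ⟨Finset.sum_nonneg fun i _ => abs_nonneg (w i s), ?_⟩
  simpa only [sq_abs] using
    Finset.sum_sq_le_sq_sum_of_nonneg (s := Finset.univ) fun i _ => abs_nonneg (w i s)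

lemma absolutelyContinuousOnInterval_of_dist_le_sum {X Y : Type*} [PseudoMetricSpace X]
    [PseudoMetricSpace Y] {f : ι → ℝ → X} {g : ℝ → Y} {a b : ℝ}
    (hf : ∀ i, AbsolutelyContinuousOnInterval (f i) a b)
    (hfg : ∀ s ∈ uIcc a b, ∀ t ∈ uIcc a b, dist (g s) (g t) ≤ ∑ i, dist (f i s) (f i t)) :
    AbsolutelyContinuousOnInterval g a b := by
  have hsum : Tendsto (fun E : ℕ × (ℕ → ℝ × ℝ) => ∑ i, ∑ k ∈ Finset.range E.1,
      dist (f i (E.2 k).1) (f i (E.2 k).2)) (AbsolutelyContinuousOnInterval.totalLengthFilter ⊓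
        𝓟 (AbsolutelyContinuousOnInterval.disjWithin a b)) (𝓝 0) := by
    simpa using tendsto_finsetSum Finset.univ fun i _ => hf i
  refine squeeze_zero' (Eventually.of_forall fun E => Finset.sum_nonneg fun _ _ => dist_nonneg)
    ?_ hsum
  filter_upwards [mem_inf_of_right (mem_principal_self _)] with E hE
  rw [Finset.sum_comm]
  exact Finset.sum_le_sum fun k hk => hfg _ (hE.1 k hk).1 _ (hE.1 k hk).2

end FiniteFamilies

lemma absolutelyContinuousOnInterval_iInf {ι : Type*} [Finite ι] {f : ι → ℝ → ℝ} {a b : ℝ}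
    (hf : ∀ i, AbsolutelyContinuousOnInterval (f i) a b) :
    AbsolutelyContinuousOnInterval (fun s => ⨅ i, f i s) a b := by
  have := Fintype.ofFinite ι
  exact absolutelyContinuousOnInterval_of_dist_le_sum hf fun _ _ _ _ => dist_iInf_le_sum_dist _ _

lemma deriv_iInf_eq {ι : Type*} [Finite ι] {f : ι → ℝ → ℝ} {i : ι} {s : ℝ}
    (hi : f i s = ⨅ k, f k s) (hf : DifferentiableAt ℝ (f i) s)
    (hinf : DifferentiableAt ℝ (fun t => ⨅ k, f k t) s) :
    deriv (fun t => ⨅ k, f k t) s = deriv (f i) s := by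
  have hmin : IsLocalMin (f i - fun t => ⨅ k, f k t) s := Eventually.of_forall fun t => by
    simp only [Pi.sub_apply, ← hi, sub_self]
    exact sub_nonneg.2 (ciInf_le (Finite.bddBelow_range fun k => f k t) i)
  have hzero := hmin.deriv_eq_zero
  rw [deriv_sub hf hinf, sub_eq_zero] at hzero
  exact hzero.symm

lemma exp_mul_le_add_integral_of_deriv_add_mul_le {u g : ℝ → ℝ} {a b c : ℝ} (hab : a ≤ b)
    (hu : AbsolutelyContinuousOnInterval u a b) (hg : IntervalIntegrable g volume a b)
    (hug : ∀ᵐ s, s ∈ Icc a b → deriv u s + c * u s ≤ g s) :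
    Real.exp (c * b) * u b ≤ Real.exp (c * a) * u a + ∫ s in a..b, Real.exp (c * s) * g s := by
  have hexp : AbsolutelyContinuousOnInterval (fun s => Real.exp (c * s)) a b :=
    ContDiffOn.absolutelyContinuousOnInterval (by fun_prop)
  have hprod := hexp.fun_mul hu
  have hmono : ∫ s in a..b, deriv (fun s => Real.exp (c * s) * u s) s ≤
      ∫ s in a..b, Real.exp (c * s) * g s := by
    refine intervalIntegral.integral_mono_ae_restrict hab hprod.intervalIntegrable_deriv
      (hg.continuousOn_mul (by fun_prop)) ((ae_restrict_iff' measurableSet_Icc).2 ?_)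
    filter_upwards [hu.ae_differentiableAt, hug] with s hdiff hle hs
    have hexp' : HasDerivAt (fun s => Real.exp (c * s)) (Real.exp (c * s) * c) s := by
      simpa using ((hasDerivAt_id s).const_mul c).exp
    rw [(hexp'.fun_mul (hdiff (by rwa [uIcc_of_le hab])).hasDerivAt).deriv]
    calc Real.exp (c * s) * c * u s + Real.exp (c * s) * deriv u s
        = Real.exp (c * s) * (deriv u s + c * u s) := by ring
      _ ≤ Real.exp (c * s) * g s := by gcongr; exact hle hs
  linarith [hprod.integral_deriv_eq_sub]

section Configurations

variable {n : ℕ}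

lemma nextVal_eq_finRotate (x : Fin n → ℝ) (j : Fin n) :
    nextVal x j = x (finRotate n j) + if (j : ℕ) + 1 < n then 0 else 2 * π := by
  obtain _ | m := n
  · exact j.elim0
  unfold nextVal
  split_ifs with h
  · rw [add_zero]
    congr 1
    rw [Fin.ext_iff, coe_finRotate_of_ne_last]
    rintro rfl
    exact h.ne rfl
  · obtain rfl : j = Fin.last m := Fin.ext (by rw [Fin.val_last]; omega)
    rw [finRotate_last]
    rfl

lemma nextVal_mem_Xspace {x : Fin n → ℝ} (hx : x ∈ Xspace n) : nextVal x ∈ Xspace n := by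
  obtain ⟨hmono, hlt⟩ := hx
  refine ⟨fun i j hij => ?_, fun i j => ?_⟩
  · have hij' : (i : ℕ) < j := hij
    have hi : (i : ℕ) + 1 < n := by omega
    simp only [nextVal, hi, dif_pos]
    split_ifs with hj
    · exact hmono (Fin.mk_lt_mk.2 (Nat.succ_lt_succ hij'))
    · exact hlt _ _
  · unfold nextVal
    split_ifs with hi hj hj
    · exact hlt _ _
    · linarith [hlt ⟨(i : ℕ) + 1, hi⟩ ⟨0, j.pos⟩, Real.pi_pos]
    · linarith [hmono (Fin.mk_lt_mk (hx := i.pos) (hy := hj) |>.2 (Nat.succ_pos _))]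
    · linarith [Real.pi_pos]

lemma phi_nextVal (x : Fin n → ℝ) (j : Fin n) : phi (nextVal x) j = phi x (finRotate n j) := by
  refine Finset.sum_equiv (finRotate n) (by simp) fun k _ => ?_
  rw [nextVal_eq_finRotate x j, nextVal_eq_finRotate x k]
  split_ifs
  · simp only [add_zero]
  · rw [← cot_periodic.sub_eq ((x (finRotate n j) - x (finRotate n k)) / 2)]
    congr 1
    ring
  · rw [← cot_periodic ((x (finRotate n j) - x (finRotate n k)) / 2)]
    congr 1
    ring
  · rw [add_sub_add_right_eq_sub]

lemma sum_gap [NeZero n] (x : Fin n → ℝ) : ∑ j, gap x j = 2 * π := by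
  obtain _ | m := n
  · exact absurd rfl (NeZero.ne 0)
  simp only [gap, nextVal_eq_finRotate, Finset.sum_sub_distrib, Finset.sum_add_distrib]
  rw [Equiv.sum_comp (finRotate (m + 1)) x, add_sub_cancel_left, Fin.sum_univ_castSucc]
  simp

lemma sum_sub_sub_le_phi_sub_phi {x y : Fin n → ℝ} (hx : x ∈ Xspace n) (hy : y ∈ Xspace n)
    {j : Fin n} (hj : ∀ k, y j - x j ≤ y k - x k) :
    ∑ k, ((y k - x k) - (y j - x j)) ≤ 2 * (phi y j - phi x j) := by
  rw [← Finset.add_sum_erase _ _ (Finset.mem_univ j), sub_self, zero_add, phi, phi,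
    ← Finset.sum_sub_distrib, Finset.mul_sum]
  refine Finset.sum_le_sum fun k hk => ?_
  have hjk := hj k
  rcases lt_or_gt_of_ne (Finset.ne_of_mem_erase hk) with hlt | hgt
  · have hcot := sub_le_cot_sub_cot (a := (y j - y k) / 2) (b := (x j - x k) / 2)
      (by linarith [hy.1 hlt]) (by linarith) (by linarith [hx.2 j k])
    linarith
  · have hcot := sub_le_cot_sub_cot (a := (y j - y k) / 2 + π) (b := (x j - x k) / 2 + π)
      (by linarith [hy.2 k j]) (by linarith) (by linarith [hx.1 hgt])
    rw [cot_periodic, cot_periodic] at hcot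
    linarith

lemma two_pi_sub_mul_gap_le {x : Fin n → ℝ} (hx : x ∈ Xspace n) {j : Fin n}
    (hj : ∀ k, gap x j ≤ gap x k) :
    2 * π - n * gap x j ≤ 2 * (phi x (finRotate n j) - phi x j) := by
  have := j.neZero
  calc 2 * π - n * gap x j = ∑ k, (gap x k - gap x j) := by
        rw [Finset.sum_sub_distrib, sum_gap, Finset.sum_const, Finset.card_univ,
          Fintype.card_fin, nsmul_eq_mul]
    _ ≤ 2 * (phi (nextVal x) j - phi x j) :=
        sum_sub_sub_le_phi_sub_phi hx (nextVal_mem_Xspace hx) hj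
    _ = 2 * (phi x (finRotate n j) - phi x j) := by rw [phi_nextVal]

lemma sin_half_sub_ne_zero {x : Fin n → ℝ} (hx : x ∈ Xspace n) {j k : Fin n} (hjk : j ≠ k) :
    Real.sin ((x j - x k) / 2) ≠ 0 := by
  rcases lt_or_gt_of_ne hjk with hlt | hgt
  · exact (Real.sin_neg_of_neg_of_neg_pi_lt (by linarith [hx.1 hlt]) (by linarith [hx.2 k j])).ne
  · exact (Real.sin_pos_of_pos_of_lt_pi (by linarith [hx.1 hgt]) (by linarith [hx.2 j k])).ne'

lemma continuousOn_phi (j : Fin n) : ContinuousOn (fun x => phi x j) (Xspace n) :=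
  continuousOn_finsetSum _ fun k hk x hx =>
    ((hasDerivAt_cot (sin_half_sub_ne_zero hx (Finset.ne_of_mem_erase hk).symm)).continuousAt.comp
      (f := fun x : Fin n → ℝ => (x j - x k) / 2) (by fun_prop)).continuousWithinAt

lemma dGap_le_mul_sub_minGap [NeZero n] (x : Fin n → ℝ) :
    dGap x ≤ ((n : ℝ) - 1) * (2 * π / n - minGap x) := by
  refine ciSup_le fun j => ?_
  have hn : (n : ℝ) ≠ 0 := NeZero.ne _
  simpa only [Fintype.card_fin, minGap] using abs_sub_le_mul_sub_iInf (u := gap x) (c := 2 * π / n)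
    (by rw [sum_gap, Fintype.card_fin, mul_div_cancel₀ _ hn]) j

lemma sub_minGap_le_dGap [NeZero n] (x : Fin n → ℝ) : 2 * π / n - minGap x ≤ dGap x := by
  obtain ⟨j, hj⟩ := exists_eq_ciInf_of_finite (f := gap x)
  rw [minGap, ← hj]
  exact (le_abs_self _).trans
    (le_ciSup (f := fun j => |2 * π / n - gap x j|) (Finite.bddAbove_range _) j)

end Configurations

section Paths

variable {n : ℕ} {θ : ℝ → Fin n → ℝ}

lemma hasDerivAt_gap {v : Fin n → ℝ} {s : ℝ} (hθ : ∀ j, HasDerivAt (fun t => θ t j) (v j) s)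
    (j : Fin n) : HasDerivAt (fun t => gap (θ t) j) (v (finRotate n j) - v j) s := by
  simp only [gap, nextVal_eq_finRotate]
  exact ((hθ _).add_const _).sub (hθ j)

lemma absolutelyContinuousOnInterval_gap {a b : ℝ}
    (hθ : ∀ j, AbsolutelyContinuousOnInterval (fun s => θ s j) a b) (j : Fin n) :
    AbsolutelyContinuousOnInterval (fun s => gap (θ s) j) a b := by
  simp only [gap, nextVal_eq_finRotate]
  exact ((hθ _).fun_add contDiffOn_const.absolutelyContinuousOnInterval).fun_sub (hθ j)

lemma AbsCont.absolutelyContinuousOnInterval {T : ℝ} (hT : 0 ≤ T) (hθ : AbsCont T θ)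
    (j : Fin n) : AbsolutelyContinuousOnInterval (fun s => θ s j) 0 T := by
  obtain ⟨v, hv, hθv⟩ := hθ
  have hint : IntervalIntegrable (fun s => v s j) volume 0 T :=
    (intervalIntegrable_iff_integrableOn_Icc_of_le hT).2 (hv j)
  refine absolutelyContinuousOnInterval_of_dist_le_sum (ι := Unit) (fun _ =>
    hint.absolutelyContinuousOnInterval_intervalIntegral left_mem_uIcc) fun s hs t ht => ?_
  rw [uIcc_of_le hT] at hs ht
  simp [hθv s hs, hθv t ht]

lemma absCont_of_mEnergy_lt_top {T : ℝ} (hθ : mEnergy n T θ < ⊤) : AbsCont T θ := by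
  by_contra hne
  rw [mEnergy, if_neg hne] at hθ
  exact hθ.ne rfl

lemma abs_deriv_sub_le_sqrt_eDensity (θ : ℝ → Fin n → ℝ) (s : ℝ) (j : Fin n) :
    |deriv (fun t => θ t j) s - 2 * phi (θ s) j| ≤ √2 * √(eDensity θ s) := by
  rw [← Real.sqrt_mul zero_le_two, ← Real.sqrt_sq_eq_abs]
  refine Real.sqrt_le_sqrt ?_
  have hsingle := Finset.single_le_sum
    (f := fun j => (deriv (fun t => θ t j) s - 2 * phi (θ s) j) ^ 2)
    (fun _ _ => sq_nonneg _) (Finset.mem_univ j)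
  unfold eDensity
  linarith

lemma intervalIntegrable_sqrt_eDensity {a b : ℝ}
    (hθ : ∀ j, AbsolutelyContinuousOnInterval (fun s => θ s j) a b)
    (hX : ∀ s ∈ uIcc a b, θ s ∈ Xspace n) :
    IntervalIntegrable (fun s => √(eDensity θ s)) volume a b := by
  have hphi (j : Fin n) : IntervalIntegrable (fun s => phi (θ s) j) volume a b :=
    ((continuousOn_phi j).comp (continuousOn_pi.2 fun k => (hθ k).continuousOn)
      hX).intervalIntegrable
  have hsqrt := intervalIntegrable_sqrt_sum_sq fun j =>
    (hθ j).intervalIntegrable_deriv.sub ((hphi j).const_mul 2)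
  simpa only [eDensity, Real.sqrt_mul one_half_pos.le] using hsqrt.const_mul √(1 / 2)

lemma sub_le_deriv_gap {s : ℝ} (hX : θ s ∈ Xspace n)
    (hθ : ∀ j, DifferentiableAt ℝ (fun t => θ t j) s) {j : Fin n}
    (hj : ∀ k, gap (θ s) j ≤ gap (θ s) k) :
    2 * π - n * gap (θ s) j - 2 * √2 * √(eDensity θ s) ≤ deriv (fun t => gap (θ t) j) s := by
  rw [(hasDerivAt_gap (fun k => (hθ k).hasDerivAt) j).deriv]
  have hdrift := two_pi_sub_mul_gap_le hX hj
  have hnext := neg_le_of_abs_le (abs_deriv_sub_le_sqrt_eDensity θ s (finRotate n j))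
  have hself := le_of_abs_le (abs_deriv_sub_le_sqrt_eDensity θ s j)
  linarith

lemma sub_le_deriv_minGap [NeZero n] {s : ℝ} (hX : θ s ∈ Xspace n)
    (hθ : ∀ j, DifferentiableAt ℝ (fun t => θ t j) s)
    (hmin : DifferentiableAt ℝ (fun t => minGap (θ t)) s) :
    2 * π - n * minGap (θ s) - 2 * √2 * √(eDensity θ s) ≤ deriv (fun t => minGap (θ t)) s := by
  obtain ⟨j, hj⟩ := exists_eq_ciInf_of_finite (f := gap (θ s))
  have hgap : DifferentiableAt ℝ (fun t => gap (θ t) j) s :=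
    (hasDerivAt_gap (fun k => (hθ k).hasDerivAt) j).differentiableAt
  calc 2 * π - n * minGap (θ s) - 2 * √2 * √(eDensity θ s)
      = 2 * π - n * gap (θ s) j - 2 * √2 * √(eDensity θ s) := by rw [minGap, hj]
    _ ≤ deriv (fun t => gap (θ t) j) s :=
        sub_le_deriv_gap hX hθ fun k => hj.trans_le (ciInf_le (Finite.bddBelow_range _) k)
    _ = deriv (fun t => minGap (θ t)) s :=
        (deriv_iInf_eq (f := fun j t => gap (θ t) j) hj hgap hmin).symm

lemma exp_mul_sub_minGap_le [NeZero n] {a b : ℝ} (hab : a ≤ b)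
    (hθ : ∀ j, AbsolutelyContinuousOnInterval (fun s => θ s j) a b)
    (hX : ∀ s ∈ Icc a b, θ s ∈ Xspace n) :
    Real.exp (n * b) * (2 * π / n - minGap (θ b)) ≤
      Real.exp (n * a) * (2 * π / n - minGap (θ a)) +
        2 * √2 * ∫ s in a..b, Real.exp (n * s) * √(eDensity θ s) := by
  have hmin : AbsolutelyContinuousOnInterval (fun s => minGap (θ s)) a b :=
    absolutelyContinuousOnInterval_iInf (absolutelyContinuousOnInterval_gap hθ)
  have hdeficit : AbsolutelyContinuousOnInterval (fun s => 2 * π / n - minGap (θ s)) a b :=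
    contDiffOn_const.absolutelyContinuousOnInterval.fun_sub hmin
  have hint : IntervalIntegrable (fun s => √(eDensity θ s)) volume a b :=
    intervalIntegrable_sqrt_eDensity hθ (by rwa [uIcc_of_le hab])
  have hdiff : ∀ᵐ s, ∀ j, s ∈ uIcc a b → DifferentiableAt ℝ (fun t => θ t j) s :=
    ae_all_iff.2 fun j => (hθ j).ae_differentiableAt
  have hgronwall := exp_mul_le_add_integral_of_deriv_add_mul_le (c := n) hab hdeficit
    (hint.const_mul (2 * √2)) (by
      filter_upwards [hdiff, hmin.ae_differentiableAt] with s hθs hmins hs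
      have hs' : s ∈ uIcc a b := by rwa [uIcc_of_le hab]
      have hn : (n : ℝ) ≠ 0 := NeZero.ne _
      rw [deriv_const_sub, mul_sub, mul_div_cancel₀ _ hn]
      linarith [sub_le_deriv_minGap (hX s hs) (fun j => hθs j hs') (hmins hs')])
  simpa only [mul_left_comm (Real.exp _) (2 * √2), intervalIntegral.integral_const_mul]
    using hgronwall

theorem finite_energy_gap_estimate_general [NeZero n] {T : ℝ} (hT : 0 ≤ T) (hθ : AbsCont T θ)
    (hX : ∀ s ∈ Icc 0 T, θ s ∈ Xspace n) :
    dGap (θ T) ≤ ((n : ℝ) - 1) * Real.exp (-(n : ℝ) * T) *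
      (2 * √2 * (∫ s in (0 : ℝ)..T, Real.exp (n * s) * √(eDensity θ s)) + dGap (θ 0)) := by
  have hn : (0 : ℝ) ≤ n - 1 := sub_nonneg.2 (by exact_mod_cast NeZero.one_le)
  have hgrowth := exp_mul_sub_minGap_le hT (hθ.absolutelyContinuousOnInterval hT) hX
  rw [mul_zero, Real.exp_zero, one_mul] at hgrowth
  calc dGap (θ T) ≤ ((n : ℝ) - 1) * (2 * π / n - minGap (θ T)) := dGap_le_mul_sub_minGap (θ T)
    _ = ((n : ℝ) - 1) * Real.exp (-(n : ℝ) * T) *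
        (Real.exp (n * T) * (2 * π / n - minGap (θ T))) := by
      rw [mul_assoc, ← mul_assoc (Real.exp _), ← Real.exp_add, neg_mul, neg_add_cancel,
        Real.exp_zero, one_mul]
    _ ≤ _ := by
      gcongr
      linarith [sub_minGap_le_dGap (θ 0)]

end Paths

/-- For a locally finite-energy system,
`d(θ_t) ≤ (n-1) e^{-nt} (2√2 ∫₀ᵗ e^{ns} √(j_s(θ)) ds + d(θ_0))`. -/
theorem finite_energy_gap_estimate
    (n : ℕ) (hn : 2 ≤ n) (θ : ℝ → Fin n → ℝ)
    (hX : ∀ t ∈ Ici (0 : ℝ), θ t ∈ Xspace n)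
    (hJ : ∀ T : ℝ, 0 ≤ T → mEnergy n T θ < ⊤) :
    ∀ t ∈ Ici (0 : ℝ),
      dGap (θ t) ≤ ((n : ℝ) - 1) * Real.exp (-(n : ℝ) * t) *
        (2 * Real.sqrt 2 * (∫ s in (0 : ℝ)..t, Real.exp (n * s) * Real.sqrt (eDensity θ s))
          + dGap (θ 0)) := by
  intro t ht
  have : NeZero n := ⟨by omega⟩
  exact finite_energy_gap_estimate_general ht (absCont_of_mEnergy_lt_top (hJ t ht))
    fun s hs => hX s hs.1

end
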